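/- arXiv:2507.22869 — 2 statements merged into one kernel-verified Lean document; each statement's English description precedes it below -/
import Mathlib

section
/- Let d and ℓ be integers with 1 ≤ ℓ ≤ d. Let (A_n) and (B_n) be sequences of real symmetric positive definite d×d matrices such that n^{-1}·A_n converges entrywise to the block-diagonal matrix diag(𝒲, Ω) and n^{-3}·B_n converges entrywise to the block-diagonal matrix diag(𝒱, 0_{(d−ℓ)×(d−ℓ)}), where 𝒲 and 𝒱 are real symmetric positive definite ℓ×ℓ matrices and Ω is a real symmetric positive definite (d−ℓ)×(d−ℓ) matrix. For each n, let λ_{n,1} ≤ λ_{n,2} ≤ ⋯ ≤ λ_{n,d} denote the generalized eigenvalues of the pencil (A_n, B_n), ordered increasingly. Then n²·Σ_{i=1}^{ℓ} λ_{n,i} → tr(𝒲·𝒱^{-1}) as n → ∞. -/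
open Filter Matrix Polynomial

/-!
Put `A' = A / n`, `B' = B / n³` and let `ν i = (n² λ i)⁻¹` be the reciprocal rescaled generalized
eigenvalues. They satisfy `det (A' - x B') = det A' * ∏ i, (1 - x ν i)` for every real `x`
(`det_sub_smul_eq`). Evaluating at `x = -1` bounds the positive numbers `ν i`, so every subsequence
has a further subsequence along which `ν` converges to some nonnegative antitone `a`. In the limit
the block structure gives `det W * ∏ i, (1 - x a i) = det (W - x V)`, which has degree exactly `l`
in `x`. Hence exactly the first `l` of the `a i` are nonzero, and their inverses are the eigenvalues
of `W * V⁻¹`, whose sum is the trace (`limit_identity`). As the limit does not depend on the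
subsequence, the whole sequence converges. Working with reciprocals keeps the `d - l` eigenvalues
that escape to infinity under control: their reciprocals tend to `0`.
-/

lemma gen_eigenvalue_pos {d : ℕ} {A B : Matrix (Fin d) (Fin d) ℝ} (hA : A.PosDef) (hB : B.PosDef)
    {x : ℝ} (hx : (x • B - A).det = 0) : 0 < x := by
  by_contra! h
  have h1 : (A + (-x) • B).PosDef := hA.add_posSemidef (hB.posSemidef.smul (by linarith))
  have h2 : (A + (-x) • B) = -(x • B - A) := by
    rw [neg_smul]; abel
  have h3 := h1.det_pos
  rw [h2, Matrix.det_neg, hx] at h3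
  simp at h3

lemma eval_det_pencil {d : ℕ} (A B : Matrix (Fin d) (Fin d) ℝ) (x : ℝ) :
    (Matrix.det ((X : ℝ[X]) • B.map C - A.map C)).eval x = (x • B - A).det := by
  rw [← Polynomial.coe_evalRingHom, RingHom.map_det]
  congr 1
  ext i j
  simp
  ring

/-- The factorization of `det (x B - A)` over its roots: the pencil polynomial has leading
coefficient `det B` and as many roots as its degree. -/
lemma det_pencil_eq_prod {d : ℕ} {A B : Matrix (Fin d) (Fin d) ℝ} (hB : B.PosDef)
    {lam : Fin d → ℝ}
    (hroots : (Matrix.det ((X : ℝ[X]) • B.map C - A.map C)).roots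
      = Multiset.map lam Finset.univ.val) (x : ℝ) :
    (x • B - A).det = B.det * ∏ i, (x - lam i) := by
  set p := Matrix.det ((X : ℝ[X]) • B.map C - A.map C) with hp
  have hp' : p = Matrix.det ((X : ℝ[X]) • B.map C + (-A).map C) := by
    rw [hp]; congr 1; ext i j; simp [sub_eq_add_neg]
  have hle : p.natDegree ≤ d := by
    rw [hp']; simpa using natDegree_det_X_add_C_le B (-A)
  have hco : p.coeff d = B.det := by
    rw [hp']; simpa using coeff_det_X_add_C_card B (-A)
  have hdeg : p.natDegree = d :=
    le_antisymm hle (le_natDegree_of_ne_zero (by rw [hco]; exact hB.det_pos.ne'))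
  have hcard : Multiset.card p.roots = p.natDegree := by
    rw [hroots, hdeg]; simp
  have h := C_leadingCoeff_mul_prod_multiset_X_sub_C hcard
  rw [leadingCoeff, hdeg, hco, hroots] at h
  rw [← eval_det_pencil, ← hp, ← h]
  rw [Multiset.map_map, eval_C_mul]
  change _ * eval x (∏ i, (X - C (lam i))) = _
  rw [eval_prod]
  simp

/-- The same factorization in terms of the reciprocals of the generalized eigenvalues. -/
lemma det_sub_smul_eq {d : ℕ} {A B : Matrix (Fin d) (Fin d) ℝ} (hB : B.PosDef)
    {lam : Fin d → ℝ}
    (hroots : (Matrix.det ((X : ℝ[X]) • B.map C - A.map C)).roots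
      = Multiset.map lam Finset.univ.val) (hpos : ∀ i, 0 < lam i) (x : ℝ) :
    (A - x • B).det = A.det * ∏ i, (1 - x * (lam i)⁻¹) := by
  have key : ∀ y : ℝ, (A - y • B).det = B.det * ∏ i, (lam i - y) := by
    intro y
    rw [← neg_sub, Matrix.det_neg, det_pencil_eq_prod hB hroots, mul_left_comm]
    congr 1
    have : ∏ i, (lam i - y) = ∏ i, (-1) * (y - lam i) :=
      Finset.prod_congr rfl fun i _ => by ring
    rw [this, Finset.prod_mul_distrib]
    simp
  have h0 := key 0
  simp only [zero_smul, sub_zero] at h0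
  rw [key, h0, mul_assoc, ← Finset.prod_mul_distrib]
  congr 1
  refine Finset.prod_congr rfl fun i _ => ?_
  have := (hpos i).ne'
  field_simp

/-- The limiting identity determines which `a i` vanish (all but the first `l`, by comparing degrees
in `x` and using monotonicity) and the sum of the inverses of the others. -/
lemma limit_identity {d l : ℕ} (hld : l ≤ d) {W V : Matrix (Fin l) (Fin l) ℝ}
    (hW : W.PosDef) (hV : V.PosDef) {a : Fin d → ℝ} (ha : Antitone a) (h0 : ∀ i, 0 ≤ a i)
    (h : ∀ x : ℝ, W.det * ∏ i, (1 - x * a i) = (W - x • V).det) :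
    (∀ i : Fin l, a (Fin.castLE hld i) ≠ 0) ∧
      ∑ i : Fin l, (a (Fin.castLE hld i))⁻¹ = (W * V⁻¹).trace := by
  have hVu : IsUnit V.det := hV.det_pos.ne'.isUnit
  have hWd := hW.det_pos.ne'
  have hcp : ∀ x : ℝ, (W - x • V).det = (-1) ^ l * V.det * (W * V⁻¹).charpoly.eval x := by
    intro x
    have : W - x • V = -((Matrix.scalar (Fin l) x - W * V⁻¹) * V) := by
      rw [sub_mul, Matrix.nonsing_inv_mul_cancel_right _ _ hVu]
      simp [← Matrix.smul_one_eq_diagonal]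
    rw [Matrix.eval_charpoly, this, Matrix.det_neg, Matrix.det_mul, Fintype.card_fin]
    ring
  have hc : (-1 : ℝ) ^ l * V.det ≠ 0 := mul_ne_zero (by simp) hV.det_pos.ne'
  have hpoly : C W.det * ∏ i, (1 - C (a i) * X)
      = C ((-1) ^ l * V.det) * (W * V⁻¹).charpoly := by
    refine Polynomial.funext fun x => ?_
    rw [eval_C_mul, eval_C_mul, ← hcp, ← h, eval_prod]
    congr 1
    refine Finset.prod_congr rfl fun i _ => ?_
    simp
    ring
  classical
  set S : Finset (Fin d) := Finset.univ.filter fun i => a i ≠ 0 with hS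
  have hfac : ∀ i, a i ≠ 0 → (1 - C (a i) * X : ℝ[X]).natDegree = 1 := by
    intro i hi
    have : (1 - C (a i) * X : ℝ[X]) = C (-a i) * X + C 1 := by simp; ring
    rw [this, natDegree_linear (by simpa using hi)]
  have hprod : ∏ i, (1 - C (a i) * X : ℝ[X]) = ∏ i ∈ S, (1 - C (a i) * X : ℝ[X]) := by
    refine (Finset.prod_subset (Finset.subset_univ S) fun i _ hi => ?_).symm
    have : a i = 0 := by simpa [hS] using hi
    simp [this]
  have hcard : S.card = l := by
    have h1 := congrArg natDegree hpoly
    rw [natDegree_C_mul hWd, natDegree_C_mul hc, Matrix.charpoly_natDegree_eq_dim, hprod,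
      natDegree_prod _ _ ?_, Finset.sum_congr rfl fun i hi => hfac i (by simpa [hS] using hi)] at h1
    · simpa using h1
    · intro i hi h2
      have := hfac i (by simpa [hS] using hi)
      simp [h2] at this
  set T : Finset (Fin d) := Finset.univ.map (Fin.castLEEmb hld) with hT
  have hST : S = T := by
    refine Finset.eq_of_subset_of_card_le (fun i hi => ?_) (by simp [hT, hcard])
    have hai : a i ≠ 0 := by simpa [hS] using hi
    -- `S` is a lower set, so it contains the `i + 1` indices up to `i`.
    have hsub : Finset.Iic i ⊆ S := by
      intro j hj
      have hji := ha (Finset.mem_Iic.1 hj)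
      have := lt_of_le_of_ne (h0 i) hai.symm
      simp [hS]; linarith
    have hlt := Finset.card_le_card hsub
    rw [Fin.card_Iic, hcard] at hlt
    simp only [hT, Finset.mem_map, Finset.mem_univ, true_and]
    exact ⟨⟨i, hlt⟩, by ext; simp⟩
  have hne : ∀ i : Fin l, a (Fin.castLE hld i) ≠ 0 := by
    intro i
    have : Fin.castLE hld i ∈ S := by rw [hST, hT]; simp
    simpa [hS] using this
  refine ⟨hne, ?_⟩
  rw [hprod, hST, hT, Finset.prod_map] at hpoly
  simp only [Fin.coe_castLEEmb] at hpoly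
  have hsplit : ∏ i : Fin l, (1 - C (a (Fin.castLE hld i)) * X : ℝ[X])
      = C (∏ i : Fin l, -a (Fin.castLE hld i)) * ∏ i : Fin l, (X - C (a (Fin.castLE hld i))⁻¹) := by
    rw [map_prod, ← Finset.prod_mul_distrib]
    refine Finset.prod_congr rfl fun i _ => ?_
    have : (C (a (Fin.castLE hld i)) * C (a (Fin.castLE hld i))⁻¹ : ℝ[X]) = 1 := by
      rw [← C_mul, mul_inv_cancel₀ (hne i), C_1]
    rw [C_neg, mul_sub, neg_mul, neg_mul, this]; ring
  rw [hsplit, ← mul_assoc, ← C_mul] at hpoly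
  have hr := congrArg roots hpoly
  rw [roots_C_mul _ hc, roots_C_mul _ (mul_ne_zero hWd
    (Finset.prod_ne_zero_iff.2 fun i _ => neg_ne_zero.2 (hne i))),
    roots_prod _ _ (Finset.prod_ne_zero_iff.2 fun i _ => X_sub_C_ne_zero _)] at hr
  simp only [roots_X_sub_C, Multiset.bind_singleton] at hr
  have hs : (W * V⁻¹).charpoly.Splits := by
    rw [splits_iff_card_roots, ← hr]; simp
  rw [Matrix.trace_eq_sum_roots_charpoly_of_splits hs, ← hr]
  rfl

/-- Convergence of the sum of inverses of the first `l` reciprocal eigenvalues, for a convergent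
pencil whose limit is block diagonal. -/
lemma tendsto_sum_inv {d l : ℕ} (hld : l ≤ d) {W V : Matrix (Fin l) (Fin l) ℝ} {w : ℝ}
    (hW : W.PosDef) (hV : V.PosDef) (hw : w ≠ 0)
    {A B : ℕ → Matrix (Fin d) (Fin d) ℝ} {A' B' : Matrix (Fin d) (Fin d) ℝ}
    (hA : Tendsto A atTop (nhds A')) (hB : Tendsto B atTop (nhds B'))
    (hlim : ∀ x : ℝ, (A' - x • B').det = (W - x • V).det * w)
    {v : ℕ → Fin d → ℝ} (hanti : ∀ n, Antitone (v n)) (hnn : ∀ n i, 0 ≤ v n i)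
    (hv : ∀ᶠ n in atTop, ∀ x : ℝ, (A n - x • B n).det = (A n).det * ∏ i, (1 - x * v n i)) :
    Tendsto (fun n => ∑ i : Fin l, (v n (Fin.castLE hld i))⁻¹) atTop
      (nhds (W * V⁻¹).trace) := by
  have hdA' : A'.det = W.det * w := by simpa using hlim 0
  have hdA0 : A'.det ≠ 0 := by rw [hdA']; exact mul_ne_zero hW.det_pos.ne' hw
  have hdet : ∀ x : ℝ, Tendsto (fun n => (A n - x • B n).det) atTop
      (nhds (A' - x • B').det) := fun x =>
    ((continuous_id.matrix_det).tendsto _).comp (hA.sub (hB.const_smul x))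
  have hdetA : Tendsto (fun n => (A n).det) atTop (nhds A'.det) := by simpa using hdet 0
  have hP : ∀ x : ℝ, Tendsto (fun n => ∏ i, (1 - x * v n i)) atTop
      (nhds ((A' - x • B').det / A'.det)) := by
    intro x
    refine ((hdet x).div hdetA hdA0).congr' ?_
    filter_upwards [hv, hdetA.eventually_ne hdA0] with n hn hne
    rw [Pi.div_apply, hn, mul_div_cancel_left₀ _ hne]
  obtain ⟨K, hK⟩ : ∃ K : ℝ, ∀ n i, v n i ≤ K := by
    obtain ⟨K, hK⟩ := (hP (-1)).bddAbove_range
    refine ⟨K, fun n i => ?_⟩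
    have h1 : ∏ j, (1 - (-1) * v n j) ≤ K := hK ⟨n, rfl⟩
    have h2 : 1 - (-1) * v n i ≤ ∏ j, (1 - (-1) * v n j) := by
      rw [← Finset.mul_prod_erase _ _ (Finset.mem_univ i)]
      have h3 : 1 ≤ ∏ j ∈ Finset.univ.erase i, (1 - (-1) * v n j) :=
        Finset.prod_induction _ (fun y : ℝ => 1 ≤ y) (fun _ _ => one_le_mul_of_one_le_of_one_le)
          le_rfl fun j _ => by have := hnn n j; linarith
      have := hnn n i
      nlinarith
    linarith
  refine tendsto_of_subseq_tendsto fun ns hns => ?_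
  obtain ⟨a, -, ms, hms, hlima⟩ := (isCompact_Icc (a := (0 : Fin d → ℝ))
    (b := fun _ => K)).tendsto_subseq (x := fun k => v (ns k))
    (fun k => ⟨fun i => hnn _ i, fun i => hK _ i⟩)
  have hi : ∀ i, Tendsto (fun k => v (ns (ms k)) i) atTop (nhds (a i)) :=
    fun i => (tendsto_pi_nhds.1 hlima) i
  have hsub : Tendsto (fun k => ns (ms k)) atTop atTop := hns.comp hms.tendsto_atTop
  have hprod : ∀ x : ℝ, ∏ i, (1 - x * a i) = (A' - x • B').det / A'.det := fun x =>
    tendsto_nhds_unique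
      (tendsto_finsetProd _ fun i _ => ((hi i).const_mul x).const_sub 1)
      ((hP x).comp hsub)
  obtain ⟨hne, hsum⟩ := limit_identity hld hW hV (a := a)
    (fun i j hij => le_of_tendsto_of_tendsto' (hi j) (hi i) fun k => hanti _ hij)
    (fun i => ge_of_tendsto' (hi i) fun k => hnn _ i)
    (fun x => by
      have := hW.det_pos.ne'
      rw [hprod, hlim, hdA']; field_simp)
  refine ⟨ms, ?_⟩
  rw [← hsum]
  exact tendsto_finsetSum _ fun i _ => (hi _).inv₀ (hne i)

/-- Deterministic core of the Breitung-statistic proposition, case `ℓ₀ = ℓ`: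
the ordered generalized eigenvalues of the pencil `(Aₙ, Bₙ)` (the roots, with
multiplicity, of `det (λ Bₙ - Aₙ)`), summed over the first `ℓ` and scaled by `n²`,
converge to `tr (𝒲 𝒱⁻¹)`. -/
theorem stmt_0 {d l : ℕ} (hl : 1 ≤ l) (hld : l ≤ d)
    (A B : ℕ → Matrix (Fin d) (Fin d) ℝ)
    (hA : ∀ n, (A n).PosDef) (hB : ∀ n, (B n).PosDef)
    (W V : Matrix (Fin l) (Fin l) ℝ) (Om : Matrix (Fin (d - l)) (Fin (d - l)) ℝ)
    (hW : W.PosDef) (hV : V.PosDef) (hOm : Om.PosDef)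
    (hAlim : ∀ i j, Tendsto (fun n : ℕ => ((n : ℝ))⁻¹ * A n i j) atTop
      (nhds (Matrix.reindex (finSumFinEquiv.trans (finCongr (Nat.add_sub_cancel' hld)))
        (finSumFinEquiv.trans (finCongr (Nat.add_sub_cancel' hld)))
        (Matrix.fromBlocks W 0 0 Om) i j)))
    (hBlim : ∀ i j, Tendsto (fun n : ℕ => ((n : ℝ) ^ 3)⁻¹ * B n i j) atTop
      (nhds (Matrix.reindex (finSumFinEquiv.trans (finCongr (Nat.add_sub_cancel' hld)))
        (finSumFinEquiv.trans (finCongr (Nat.add_sub_cancel' hld)))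
        (Matrix.fromBlocks V 0 0 (0 : Matrix (Fin (d - l)) (Fin (d - l)) ℝ)) i j)))
    (lam : ℕ → Fin d → ℝ)
    (hmono : ∀ n, Monotone (lam n))
    (hroots : ∀ n, (Matrix.det ((Polynomial.X : Polynomial ℝ) • (B n).map Polynomial.C
        - (A n).map Polynomial.C)).roots = Multiset.map (lam n) Finset.univ.val) :
    Tendsto (fun n : ℕ => (n : ℝ) ^ 2 * ∑ i : Fin l, lam n (Fin.castLE hld i)) atTop
      (nhds (Matrix.trace (W * V⁻¹))) := by
  have hpos : ∀ n i, 0 < lam n i := by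
    intro n i
    refine gen_eigenvalue_pos (hA n) (hB n) ?_
    rw [det_pencil_eq_prod (hB n) (hroots n),
      Finset.prod_eq_zero (Finset.mem_univ i) (sub_self _), mul_zero]
  have hmain := tendsto_sum_inv (w := Om.det) hld hW hV hOm.det_pos.ne'
    (A := fun n => ((n : ℝ))⁻¹ • A n) (B := fun n => ((n : ℝ) ^ 3)⁻¹ • B n)
    (v := fun n i => ((n : ℝ) ^ 2 * lam n i)⁻¹)
    (tendsto_pi_nhds.2 fun i => tendsto_pi_nhds.2 fun j => hAlim i j)
    (tendsto_pi_nhds.2 fun i => tendsto_pi_nhds.2 fun j => hBlim i j) ?_ ?_ ?_ ?_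
  · simpa only [inv_inv, ← Finset.mul_sum] using hmain
  · intro x
    rw [← Matrix.det_fromBlocks_zero₂₁ (W - x • V) 0 Om,
      ← Matrix.det_reindex_self (finSumFinEquiv.trans (finCongr (Nat.add_sub_cancel' hld)))]
    congr 1
    have : fromBlocks (W - x • V) 0 0 Om = fromBlocks W 0 0 Om - x • fromBlocks V 0 0 0 := by
      ext (i | i) (j | j) <;> simp
    rw [this]
    rfl
  · intro n i j hij
    -- for `n = 0` both sides are the junk value `0⁻¹ = 0`
    rcases Nat.eq_zero_or_pos n with rfl | hn
    · simp
    · have := hpos n i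
      have := hmono n hij
      have : (0 : ℝ) < n := by exact_mod_cast hn
      dsimp only
      gcongr
  · intro n i
    have := hpos n i
    positivity
  · filter_upwards [eventually_gt_atTop 0] with n hn x
    have hn' : (n : ℝ) ≠ 0 := by positivity
    have h1 : ((n : ℝ))⁻¹ • A n - x • ((n : ℝ) ^ 3)⁻¹ • B n
        = ((n : ℝ))⁻¹ • (A n - (x * ((n : ℝ) ^ 2)⁻¹) • B n) := by
      rw [smul_sub, smul_smul, smul_smul]
      congr 2
      field_simp
    rw [h1, Matrix.det_smul, Matrix.det_smul, det_sub_smul_eq (hB n) (hroots n) (hpos n), mul_assoc]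
    simp only [mul_inv, mul_assoc]
end

section
/- Let p ≥ 2 and 1 ≤ r ≤ p−1 be integers, and set q := p − r. Let β_x ∈ ℝ^{(p−1)×r} have rank r, and let β_{x,⊥} ∈ ℝ^{(p−1)×(q−1)} have rank q−1 and satisfy β_{x,⊥}ᵀ β_x = 0. Let b⁺, b⁻ ∈ ℝ^r and τ_{xy}⁺, τ_{xy}⁻ ∈ ℝ^{q−1} be arbitrary. Define β* ∈ ℝ^{(p+1)×r} as the matrix whose first row is b⁺ᵀ, whose second row is b⁻ᵀ, and whose remaining p−1 rows form β_x; and define τ* ∈ ℝ^{(p+1)×(q+1)} as the block matrix with rows [1, 0, τ_{xy}^{+ᵀ}], [0, 1, τ_{xy}^{−ᵀ}], and [0, 0, β_{x,⊥}] (the last block occupying the final p−1 rows). Then the (p+1)×(p+1) matrix [β*, τ*] is nonsingular, for every choice of τ_{xy}⁺ and τ_{xy}⁻. -/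
/-!
A kernel vector `(a, d, c)` of `[β*, τ*]` satisfies `βx a + βxperp c = 0` by the `x`-rows.
Multiplying by `βxperpᵀ` and using orthogonality gives `βxperpᵀ βxperp c = 0`, hence
`βxperp c = 0`, and full column rank forces `c = 0` and then `a = 0`. The two `y`-rows then
read `d = 0`. The matrix is square, so injectivity is bijectivity.
-/

open Matrix

lemma eq_zero_of_mulVec_of_rank_eq {m n : ℕ} (A : Matrix (Fin m) (Fin n) ℝ)
    (h : A.rank = n) {v : Fin n → ℝ} (hv : A *ᵥ v = 0) : v = 0 := by
  have h1 := LinearMap.finrank_range_add_finrank_ker A.mulVecLin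
  rw [← Matrix.rank, h, Module.finrank_fin_fun] at h1
  have h2 : LinearMap.ker A.mulVecLin = ⊥ :=
    Submodule.finrank_eq_zero.mp (by omega)
  exact LinearMap.ker_eq_bot'.mp h2 v hv

/-- Orthogonal matrices of full column rank have column spaces meeting only in zero. -/
lemma eq_zero_of_orthogonal {m n k : ℕ} (A : Matrix (Fin m) (Fin n) ℝ)
    (B : Matrix (Fin m) (Fin k) ℝ) (hA : A.rank = n) (hB : B.rank = k)
    (hBA : Bᵀ * A = 0) {a : Fin n → ℝ} {c : Fin k → ℝ}
    (h : A *ᵥ a + B *ᵥ c = 0) : a = 0 ∧ c = 0 := by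
  have h1 : (Bᵀ * B) *ᵥ c = 0 := by
    have h2 := congrArg (Bᵀ *ᵥ ·) h
    simpa [Matrix.mulVec_add, Matrix.mulVec_mulVec, hBA] using h2
  have hc : c = 0 := eq_zero_of_mulVec_of_rank_eq B hB (by
    have := Matrix.conjTranspose_mul_self_mulVec_eq_zero B c
    rw [Matrix.conjTranspose_eq_transpose_of_trivial] at this
    exact this.mp h1)
  subst hc
  exact ⟨eq_zero_of_mulVec_of_rank_eq A hA (by simpa using h), rfl⟩

/-- Nonsingularity of `[β*, τ*]`: with rows indexed by `Fin 2 ⊕ Fin (p-1)` (the `y⁺`-row,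
the `y⁻`-row, and the `x`-rows) and columns indexed by `Fin r ⊕ (Fin 2 ⊕ Fin (p-r-1))`
(the `r` columns of `β*` followed by the `q + 1 = (p - r) + 1` columns of `τ*`), the
`(p+1) × (p+1)` matrix `[β*, τ*]` is nonsingular for every choice of `τ_{xy}^±`. -/
theorem stmt_6 (p r : ℕ) (hp : 2 ≤ p) (hr : 1 ≤ r) (hrp : r ≤ p - 1)
    (βx : Matrix (Fin (p - 1)) (Fin r) ℝ)
    (βxperp : Matrix (Fin (p - 1)) (Fin (p - r - 1)) ℝ)
    (hβx : βx.rank = r) (hβxperp : βxperp.rank = p - r - 1)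
    (horth : βxperpᵀ * βx = 0)
    (bp bm : Fin r → ℝ) (τp τm : Fin (p - r - 1) → ℝ) :
    Function.Bijective
      (Matrix.mulVecLin
        (Matrix.of (fun (i : Fin 2 ⊕ Fin (p - 1)) (j : Fin r ⊕ (Fin 2 ⊕ Fin (p - r - 1))) =>
          match i, j with
          | Sum.inl i, Sum.inl j => if i = 0 then bp j else bm j
          | Sum.inr i, Sum.inl j => βx i j
          | Sum.inl i, Sum.inr (Sum.inl j) => if i = j then (1 : ℝ) else 0
          | Sum.inr _, Sum.inr (Sum.inl _) => (0 : ℝ)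
          | Sum.inl i, Sum.inr (Sum.inr j) => if i = 0 then τp j else τm j
          | Sum.inr i, Sum.inr (Sum.inr j) => βxperp i j))) := by
  have hdim : Module.finrank ℝ (Fin r ⊕ (Fin 2 ⊕ Fin (p - r - 1)) → ℝ)
      = Module.finrank ℝ (Fin 2 ⊕ Fin (p - 1) → ℝ) := by
    simp only [Module.finrank_fintype_fun_eq_card, Fintype.card_sum, Fintype.card_fin]
    omega
  refine (fun hinj => ⟨hinj,
    (LinearMap.injective_iff_surjective_of_finrank_eq_finrank hdim).mp hinj⟩) ?_
  rw [← LinearMap.ker_eq_bot, LinearMap.ker_eq_bot']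
  intro v hv
  obtain ⟨ha, hc⟩ := eq_zero_of_orthogonal βx βxperp hβx hβxperp horth
    (a := fun j => v (Sum.inl j)) (c := fun j => v (Sum.inr (Sum.inr j))) (by
      funext i
      have := congrFun hv (Sum.inr i)
      simpa [Matrix.mulVec, dotProduct] using this)
  have ha' : ∀ j, v (Sum.inl j) = 0 := congrFun ha
  have hc' : ∀ j, v (Sum.inr (Sum.inr j)) = 0 := congrFun hc
  funext j
  rcases j with j | j | j
  · exact ha' j
  · have := congrFun hv (Sum.inl j)
    simpa [Matrix.mulVec, dotProduct, ha', hc', -Fin.sum_univ_two] using this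
  · exact hc' j
end
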